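/- arXiv:2010.14837 — 2 statements merged into one kernel-verified Lean document; each statement's English description precedes it below -/
import Mathlib

section
/- Let n ≥ 1 and let s be an element of odd order in the symplectic group Sp_{2n}(F_2). Then for every natural number k, the elements s and s^(2^k) are conjugate in Sp_{2n}(F_2). -/
/-!
The symplectic group is the unitary group of the matrix ring for the adjoint `star` of the
symplectic form, and `s` and `s ^ q` are compared first in `GL`, then in this unitary group.

Over a finite field with `q` elements, a semisimple endomorphism is conjugate to its `q`-th power:
its `K[X]`-module is a direct sum of fields `K[X] ⧸ I`, and the `q`-Frobenius maps of the summands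
together form a conjugator.

Now let `s` be unitary of odd order `m` in a finite star ring of characteristic two, and let `g` be
a unit conjugating `s` to `s ^ q`. Correcting `g` to a unitary conjugator amounts to writing
`z = star g * g`, which commutes with `s`, as `star y * y` with `y` commuting with `s`. On the fixed
points of `s`, `g` may be replaced by the identity. Off them, `1 + s + ⋯ + s ^ (m - 1) = 0`, so that
`1 = a + star a` for `a = s + ⋯ + s ^ ((m - 1) / 2)`: as `1` is a trace, there is no obstruction in
characteristic two to `z` being a norm. Explicitly, after passing to an odd power of `z` we have
`z = 1 + N` with `N` nilpotent, and `y = 1 + a * M` with `M` the nilpotent solution of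
`a * star a * M ^ 2 + M = N` obtained from Hensel's lemma.
-/

open Finset Polynomial

section Monoid

variable {M : Type*} [Monoid M] {a b : M} {q : ℕ}

lemma orderOf_eq_of_isConj (h : IsConj a b) : orderOf a = orderOf b :=
  orderOf_eq_orderOf_iff.mpr fun n ↦
    ⟨fun ha ↦ isConj_one_right.mp (ha ▸ h.pow n), fun hb ↦ isConj_one_left.mp (hb ▸ h.pow n)⟩

lemma coprime_orderOf_of_isConj_pow (ha : IsOfFinOrder a) (h : IsConj a (a ^ q)) :
    q.Coprime (orderOf a) := by
  have horder : orderOf a = orderOf a / (orderOf a).gcd q :=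
    (orderOf_eq_of_isConj h).trans (ha.orderOf_pow a q)
  rcases Nat.div_eq_self.mp horder.symm with h0 | h1
  · exact absurd h0 ha.orderOf_pos.ne'
  · exact Nat.coprime_comm.mp h1

lemma isConj_pow_pow_of_isConj_pow (h : IsConj a (a ^ q)) (k : ℕ) : IsConj a (a ^ q ^ k) := by
  induction k with
  | zero => rw [pow_zero, pow_one]
  | succ k ih =>
    rw [pow_succ, pow_mul]
    exact h.trans (ih.pow q)

lemma pow_mul_eq_self_of_mul_eq_self (hu : a * b = b) (i : ℕ) : a ^ i * b = b := by
  induction i with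
  | zero => rw [pow_zero, one_mul]
  | succ i ih => rw [pow_succ, mul_assoc, hu, ih]

lemma mul_pow_eq_self_of_mul_eq_self (hu : b * a = b) (i : ℕ) : b * a ^ i = b := by
  induction i with
  | zero => rw [pow_zero, mul_one]
  | succ i ih => rw [pow_succ, ← mul_assoc, ih, hu]

lemma commute_star_mul_self_of_semiconjBy [StarMul M] {c s t : M} (hs : s ∈ unitary M)
    (ht : t ∈ unitary M) (h : SemiconjBy c s t) : Commute (star c * c) s := by
  have hstar : star s * star c = star c * star t := by rw [← star_mul, h.eq, star_mul]
  have hct : star c * t = s * star c :=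
    calc star c * t = s * (star s * star c) * t := by
          rw [← mul_assoc, Unitary.mul_star_self_of_mem hs, one_mul]
      _ = s * star c := by
          rw [hstar, mul_assoc, mul_assoc, Unitary.star_mul_self_of_mem ht, mul_one]
  rw [commute_iff_eq, mul_assoc, h.eq, ← mul_assoc, hct, mul_assoc]

end Monoid

section FiniteField

variable {K V : Type*} [Field K] [AddCommGroup V] [Module K V]

lemma isSemisimple_of_pow_eq_one {f : Module.End K V} {m : ℕ} (hm : (m : K) ≠ 0)
    (hf : f ^ m = 1) : f.IsSemisimple :=
  Module.End.isSemisimple_of_squarefree_aeval_eq_zero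
    (X_pow_sub_one_separable_iff.mpr hm).squarefree (by simp [hf])

variable (K) [Fintype K]

lemma exists_linearEquiv_X_smul_of_isSimpleModule [Module K[X] V] [IsScalarTower K K[X] V]
    [IsSimpleModule K[X] V] :
    ∃ g : V ≃ₗ[K] V, ∀ v, g ((X : K[X]) • v) = (X ^ Fintype.card K : K[X]) • g v := by
  obtain ⟨I, hI, ⟨e⟩⟩ := isSimpleModule_iff_quot_maximal.mp ‹IsSimpleModule K[X] V›
  let := Ideal.Quotient.field I
  have : Module.Finite K (K[X] ⧸ I) := finite_of_finite_type_of_isJacobsonRing _ _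
  let φ := FiniteField.frobeniusAlgEquivOfAlgebraic K (K[X] ⧸ I)
  have hφ (p : K[X]) (y : K[X] ⧸ I) : φ (p • y) = p ^ Fintype.card K • φ y := by
    change (p • y) ^ _ = _ • y ^ _
    rw [_root_.smul_pow]
  let eK : V ≃ₗ[K] K[X] ⧸ I := e.restrictScalars K
  refine ⟨eK ≪≫ₗ φ.toLinearEquiv ≪≫ₗ eK.symm, fun v ↦ ?_⟩
  change e.symm (φ (e (X • v))) = _ • e.symm (φ (e v))
  rw [map_smul, hφ, map_smul]

lemma exists_linearEquiv_X_smul_of_isSemisimpleModule [Module K[X] V]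
    [IsScalarTower K K[X] V] [IsSemisimpleModule K[X] V] :
    ∃ g : V ≃ₗ[K] V, ∀ v, g ((X : K[X]) • v) = (X ^ Fintype.card K : K[X]) • g v := by
  obtain ⟨S, e, -, hS⟩ := IsSemisimpleModule.exists_linearEquiv_dfinsupp K[X] V
  choose g hg using fun N : S ↦
    have := hS N
    exists_linearEquiv_X_smul_of_isSimpleModule K (V := N.1)
  let eK := e.restrictScalars K
  refine ⟨eK ≪≫ₗ DFinsupp.mapRange.linearEquiv g ≪≫ₗ eK.symm, fun v ↦ ?_⟩
  change e.symm (DFinsupp.mapRange.linearEquiv g (e (X • v))) =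
    _ • e.symm (DFinsupp.mapRange.linearEquiv g (e v))
  rw [← map_smul]
  congr 1
  ext1 N
  rw [map_smul]
  exact hg N (e v N)

variable {K}

theorem isConj_pow_card_of_isSemisimple {f : Module.End K V} (hf : f.IsSemisimple) :
    IsConj f (f ^ Fintype.card K) := by
  have : IsSemisimpleModule K[X] (Module.AEval' f) := hf
  obtain ⟨g, hg⟩ := exists_linearEquiv_X_smul_of_isSemisimpleModule K (V := Module.AEval' f)
  let o := Module.AEval'.of f
  let c : V ≃ₗ[K] V := o ≪≫ₗ g ≪≫ₗ o.symm
  refine ⟨LinearMap.GeneralLinearGroup.ofLinearEquiv c, LinearMap.ext fun v ↦ ?_⟩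
  change o.symm (g (o (f v))) = (f ^ Fintype.card K) (o.symm (g (o v)))
  have hpow := Module.AEval'.X_pow_smul_of f (o.symm (g (o v))) (Fintype.card K)
  rw [o.apply_symm_apply] at hpow
  rw [LinearEquiv.symm_apply_eq, ← Module.AEval'.X_smul_of, hg]
  exact hpow

theorem isConj_pow_card_of_matrix_pow_eq_one {ι : Type*} [Fintype ι] [DecidableEq ι]
    {s : Matrix ι ι K} {m : ℕ} (hm : (m : K) ≠ 0) (hs : s ^ m = 1) :
    IsConj s (s ^ Fintype.card K) := by
  let φ : Matrix ι ι K ≃ₐ[K] Module.End K (ι → K) := Matrix.toLinAlgEquiv'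
  have hφ : φ s ^ m = 1 := by rw [← map_pow, hs, map_one]
  have h := isConj_pow_card_of_isSemisimple (isSemisimple_of_pow_eq_one hm hφ)
  simpa using (φ.symm : _ →* Matrix ι ι K).map_isConj h

end FiniteField

section CommStarRing

variable {A : Type*} [CommRing A] [StarRing A] {a z : A}

theorem exists_star_mul_self_eq_one_add_of_isNilpotent {N : A} (hN : IsNilpotent N)
    (hNstar : IsSelfAdjoint N) (ha : (a + star a) * N = N) : ∃ y, star y * y = 1 + N := by
  let P : A[X] := C (a * star a) * X ^ 2 + X - C N
  have aeval_P (M : A) : aeval M P = a * star a * M ^ 2 + M - N := by simp [P]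
  obtain ⟨M, ⟨hM, hroot⟩, huniq⟩ := existsUnique_nilpotent_sub_and_aeval_eq_zero
    (P := P) (x := (0 : A)) (by simpa [aeval_P] using hN) (by simp [P])
  rw [aeval_P] at hroot
  rw [zero_sub, isNilpotent_neg_iff] at hM
  -- `star M` is a nilpotent root of the same polynomial, whose coefficients are self-adjoint.
  have hMstar : star M = M := by
    refine huniq (star M) ⟨?_, ?_⟩
    · rw [zero_sub, isNilpotent_neg_iff]
      exact hM.map (starRingEnd A)
    · have := congrArg star hroot
      simp only [star_sub, star_add, star_mul, star_pow, star_star, star_zero,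
        hNstar.star_eq] at this
      rw [aeval_P, ← this]
      ring
  have hunit : IsUnit (1 + a * star a * M) := by
    rw [add_comm]
    exact (Commute.all _ _).isNilpotent_mul_left hM |>.isUnit_add_one
  have haM : (a + star a) * M = M := hunit.mul_right_cancel <| by
    linear_combination ha + (a + star a - 1) * hroot
  refine ⟨1 + a * M, ?_⟩
  simp only [star_add, star_one, star_mul, hMstar]
  linear_combination haM + hroot

theorem exists_star_mul_self_eq_of_isOfFinOrder [CharP A 2] (hz : IsOfFinOrder z)
    (hzstar : IsSelfAdjoint z) (ha : (a + star a) * (z - 1) = z - 1) : ∃ y, star y * y = z := by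
  obtain ⟨n, hn, hzn⟩ := isOfFinOrder_iff_pow_eq_one.mp hz
  obtain ⟨t, r, ⟨l, rfl⟩, rfl⟩ := Nat.exists_eq_two_pow_mul_odd hn.ne'
  set r := 2 * l + 1
  have hnil : IsNilpotent (z ^ r - 1) :=
    ⟨2 ^ t, by rw [sub_pow_char_pow, one_pow, ← pow_mul, mul_comm r, hzn, sub_self]⟩
  obtain ⟨y, hy⟩ := exists_star_mul_self_eq_one_add_of_isNilpotent (a := a) hnil
    ((hzstar.pow r).sub (.one A)) (by rw [← mul_geom_sum, ← mul_assoc, ha])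
  obtain ⟨k, hk⟩ : ∃ k, z ^ k * z ^ l = 1 :=
    ⟨(2 ^ t * r - 1) * l, by
      rw [← pow_add, ← Nat.succ_mul, Nat.succ_eq_add_one, Nat.sub_add_cancel hn, pow_mul, hzn,
        one_pow]⟩
  refine ⟨y * z ^ k, ?_⟩
  calc star (y * z ^ k) * (y * z ^ k) = star y * y * (z ^ k) ^ 2 := by
        rw [star_mul, star_pow, hzstar.star_eq]
        ring
    _ = z * (z ^ k * z ^ l) ^ 2 := by
        rw [hy]
        ring
    _ = z := by rw [hk, one_pow, mul_one]

end CommStarRing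

section FixedProj

variable {R : Type*} [Ring R] {s u c : R} {m : ℕ}

/-- The sum of powers `1 + s + ⋯ + s ^ (m - 1)`. When `s ^ m = 1` and `(m : R) = 1`, this is the
idempotent that projects onto the fixed points of `s`. -/
def fixedProj (s : R) (m : ℕ) : R := ∑ i ∈ range m, s ^ i

lemma mul_fixedProj (hs : s ^ m = 1) : s * fixedProj s m = fixedProj s m := by
  rw [← sub_eq_zero, ← sub_one_mul, fixedProj, mul_geom_sum, hs, sub_self]

lemma fixedProj_mul (hs : s ^ m = 1) : fixedProj s m * s = fixedProj s m := by
  rw [← sub_eq_zero, ← mul_sub_one, fixedProj, geom_sum_mul, hs, sub_self]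

lemma fixedProj_mul_of_mul_eq_self (hm : (m : R) = 1) (hu : s * u = u) :
    fixedProj s m * u = u := by
  simp only [fixedProj, sum_mul, pow_mul_eq_self_of_mul_eq_self hu, sum_const, card_range,
    nsmul_eq_mul, hm, one_mul]

lemma mul_fixedProj_of_mul_eq_self (hm : (m : R) = 1) (hu : u * s = u) :
    u * fixedProj s m = u := by
  simp only [fixedProj, mul_sum, mul_pow_eq_self_of_mul_eq_self hu, sum_const, card_range,
    nsmul_eq_mul, hm, one_mul]

lemma commute_fixedProj_of_semiconjBy {q : ℕ} (hs : s ^ m = 1) (hm : (m : R) = 1)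
    (hq : q.Coprime (orderOf s)) (hc : SemiconjBy c s (s ^ q)) : Commute c (fixedProj s m) := by
  set p := fixedProj s m
  obtain ⟨r, hr⟩ := exists_pow_eq_self_of_coprime hq
  have hsc : s * (c * p) = c * p := by
    have : SemiconjBy c (s ^ r) s := by simpa only [hr] using hc.pow_right r
    rw [← mul_assoc, ← this.eq, mul_assoc, pow_mul_eq_self_of_mul_eq_self (mul_fixedProj hs)]
  have hcs : p * c * s = p * c := by
    rw [mul_assoc, hc.eq, ← mul_assoc, mul_pow_eq_self_of_mul_eq_self (fixedProj_mul hs)]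
  calc c * p = p * (c * p) := (fixedProj_mul_of_mul_eq_self hm hsc).symm
    _ = p * c * p := (mul_assoc ..).symm
    _ = p * c := mul_fixedProj_of_mul_eq_self hm hcs

variable [StarRing R]

lemma isStarProjection_fixedProj (hs : s ^ m = 1) (hm : (m : R) = 1) (hsu : s ∈ unitary R) :
    IsStarProjection (fixedProj s m) := by
  set p := fixedProj s m
  have hstar : star p * p = star p := by
    refine mul_fixedProj_of_mul_eq_self hm ?_
    have : star p * star s = star p := by rw [← star_mul, mul_fixedProj hs]
    rw [← this, mul_assoc, Unitary.star_mul_self_of_mem hsu, mul_one, this]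
  refine ⟨fixedProj_mul_of_mul_eq_self hm (mul_fixedProj hs), ?_⟩
  exact isSelfAdjoint_iff.mpr (hstar.symm.trans (by simpa using congrArg star hstar))

lemma exists_add_star_eq_fixedProj_sub_one (hs : s ^ m = 1) (hm : Odd m) (hsu : s ∈ unitary R) :
    ∃ a, a + star a = fixedProj s m - 1 := by
  obtain ⟨j, rfl⟩ := hm
  have hstar {i k : ℕ} (hik : i + k = 2 * j + 1) : star (s ^ i) = s ^ k := by
    have := Unitary.star_mul_self_of_mem (pow_mem hsu i)
    calc star (s ^ i) = star (s ^ i) * (s ^ i * s ^ k) := by rw [← pow_add, hik, hs, mul_one]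
      _ = s ^ k := by rw [← mul_assoc, this, one_mul]
  refine ⟨∑ i ∈ range j, s ^ (i + 1), ?_⟩
  have hsum : star (∑ i ∈ range j, s ^ (i + 1)) = ∑ i ∈ range j, s ^ (j + i + 1) := by
    rw [star_sum, ← sum_range_reflect]
    refine sum_congr rfl fun i hi ↦ hstar ?_
    have := mem_range.mp hi
    lia
  rw [hsum, fixedProj, sum_range_succ', pow_zero, add_sub_cancel_right, two_mul, sum_range_add]

end FixedProj

section CutOff

variable {R : Type*} [Ring R] {c d p : R}

/-- For an idempotent `p` commuting with `c`, the element that acts as `c` on the range of `1 - p`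
and as the identity on the range of `p`. -/
def cutOff (c p : R) : R := c * (1 - p) + p

lemma cutOff_one (p : R) : cutOff 1 p = 1 := by rw [cutOff, one_mul, sub_add_cancel]

lemma mul_cutOff (hp : IsIdempotentElem p) (hc : Commute c p) : p * cutOff c p = p := by
  rw [cutOff, mul_add, ← mul_assoc, ← hc.eq, mul_assoc, hp.mul_one_sub_self, mul_zero, zero_add,
    hp.eq]

lemma cutOff_mul (hp : IsIdempotentElem p) : cutOff c p * p = p := by
  rw [cutOff, add_mul, mul_assoc, hp.one_sub_mul_self, mul_zero, zero_add, hp.eq]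

lemma cutOff_mul_cutOff (hp : IsIdempotentElem p) (hd : Commute d p) :
    cutOff c p * cutOff d p = cutOff (c * d) p := by
  have hd' : (1 - p) * cutOff d p = d * (1 - p) := by
    rw [sub_mul, one_mul, mul_cutOff hp hd, cutOff, add_sub_cancel_right]
  rw [cutOff, add_mul, mul_assoc, hd', mul_cutOff hp hd, ← mul_assoc, cutOff]

lemma isUnit_cutOff (c : Rˣ) (hp : IsIdempotentElem p) (hc : Commute (c : R) p) :
    IsUnit (cutOff (c : R) p) :=
  isUnit_iff_exists.mpr ⟨cutOff (↑c⁻¹ : R) p,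
    by rw [cutOff_mul_cutOff hp hc.units_inv_left, Units.mul_inv, cutOff_one],
    by rw [cutOff_mul_cutOff hp hc, Units.inv_mul, cutOff_one]⟩

lemma exists_units_semiconjBy_fixing_fixedProj {s : R} {m q : ℕ} (hs : s ^ m = 1)
    (hm : (m : R) = 1) (hq : q.Coprime (orderOf s)) (h : IsConj s (s ^ q)) :
    ∃ g : Rˣ, SemiconjBy (g : R) s (s ^ q) ∧
      g * fixedProj s m = fixedProj s m ∧ fixedProj s m * g = fixedProj s m := by
  obtain ⟨c, hc⟩ := h
  set p := fixedProj s m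
  have hp : IsIdempotentElem p := fixedProj_mul_of_mul_eq_self hm (mul_fixedProj hs)
  have hcp : Commute (c : R) p := commute_fixedProj_of_semiconjBy hs hm hq hc
  obtain ⟨g, hg⟩ := isUnit_cutOff c hp hcp
  refine ⟨g, ?_, ?_, ?_⟩
  · have hps : Commute p s := (fixedProj_mul hs).trans (mul_fixedProj hs).symm
    have hpsq : SemiconjBy p s (s ^ q) :=
      (fixedProj_mul hs).trans (pow_mul_eq_self_of_mul_eq_self (mul_fixedProj hs) q).symm
    rw [hg]
    exact (hc.mul_left ((Commute.one_left s).sub_left hps)).add_left hpsq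
  · rw [hg, cutOff_mul hp]
  · rw [hg, mul_cutOff hp hcp]

end CutOff

section Unitary

variable {m q : ℕ}

theorem exists_star_mul_self_eq_of_fixedProj_mul_eq {A : Type*} [CommRing A] [StarRing A]
    [CharP A 2] {s z : A} (hs : s ^ m = 1) (hm : Odd m) (hsu : s ∈ unitary A)
    (hz : IsOfFinOrder z) (hzstar : IsSelfAdjoint z) (hpz : fixedProj s m * z = fixedProj s m) :
    ∃ y, star y * y = z := by
  obtain ⟨a, ha⟩ := exists_add_star_eq_fixedProj_sub_one hs hm hsu
  refine exists_star_mul_self_eq_of_isOfFinOrder (a := a) hz hzstar ?_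
  rw [ha, sub_one_mul, mul_sub_one, hpz, sub_self, zero_sub, CharTwo.neg_eq]

variable {R : Type*} [Ring R] [StarRing R] [CharP R 2]

open scoped IsMulCommutative in
theorem exists_units_commute_star_mul_self_eq {s z : R} (hs : s ^ m = 1) (hm : Odd m)
    (hsu : s ∈ unitary R) (hz : IsOfFinOrder z) (hzstar : IsSelfAdjoint z) (hzs : Commute z s)
    (hpz : fixedProj s m * z = fixedProj s m) :
    ∃ y : Rˣ, Commute (y : R) s ∧ star (y : R) * y = z := by
  have hzs' : Commute z (star s) := by simpa only [hzstar.star_eq] using hzs.star_star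
  have hss' : Commute s (star s) := commute_unitary_self_star hsu
  let S := StarAlgebra.adjoin ℤ {s, z}
  have : IsMulCommutative S := StarAlgebra.isMulCommutative_adjoin ℤ
    (by simp [hzs.eq]) (by simp [hzstar.star_eq, hzs.eq, hzs'.eq, hss'.eq])
  let incl : S →⋆ₐ[ℤ] R := S.subtype
  have hincl : Function.Injective incl := Subtype.val_injective
  have : CharP S 2 := (incl : S →+* R).charP hincl 2
  let s' : S := ⟨s, StarAlgebra.subset_adjoin ℤ _ (by simp)⟩
  let z' : S := ⟨z, StarAlgebra.subset_adjoin ℤ _ (by simp)⟩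
  have hsu' : s' ∈ unitary S := Unitary.mem_iff.mpr
    ⟨hincl (Unitary.star_mul_self_of_mem hsu), hincl (Unitary.mul_star_self_of_mem hsu)⟩
  have hz' : IsOfFinOrder z' := 
    (Function.Injective.isOfFinOrder_iff (f := (incl : S →* R)) hincl).mp hz
  have hproj : incl (fixedProj s' m) = fixedProj s m := by
    simp only [fixedProj, map_sum, map_pow]
    rfl
  have hpz' : fixedProj s' m * z' = fixedProj s' m := hincl <| by
    rw [map_mul, hproj]
    exact hpz
  obtain ⟨y, hy⟩ := exists_star_mul_self_eq_of_fixedProj_mul_eq (hincl hs) hm hsu' hz'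
    (hincl hzstar) hpz'
  have hyunit : IsUnit y := isUnit_of_mul_isUnit_right (hy ▸ hz'.isUnit)
  exact ⟨(hyunit.map incl).unit, (Commute.all y s').map incl, congrArg incl hy⟩

theorem isConj_pow_of_isConj_coe [Finite R] {s : unitary R} (hs : Odd (orderOf s))
    (h : IsConj (s : R) ((s : R) ^ q)) : IsConj s (s ^ q) := by
  have hsm : (s : R) ^ orderOf s = 1 := by
    rw [← SubmonoidClass.coe_pow, pow_orderOf_eq_one, OneMemClass.coe_one]
  have hm : (orderOf s : R) = 1 := by
    rw [CharTwo.natCast_eq_ite, if_neg (Nat.not_even_iff_odd.mpr hs)]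
  have hfin : IsOfFinOrder (s : R) := isOfFinOrder_iff_pow_eq_one.mpr ⟨_, hs.pos, hsm⟩
  obtain ⟨g, hgs, hgp, hpg⟩ := exists_units_semiconjBy_fixing_fixedProj hsm hm
    (coprime_orderOf_of_isConj_pow hfin h) h
  set p := fixedProj (s : R) (orderOf s)
  have hpz : p * (star (g : R) * g) = p := by
    have hp : star p = p := (isStarProjection_fixedProj hsm hm s.2).isSelfAdjoint.star_eq
    have hpg' : p * star (g : R) = p := by simpa only [star_mul, hp] using congrArg star hgp
    rw [← mul_assoc, hpg', hpg]
  obtain ⟨y, hys, hy⟩ := exists_units_commute_star_mul_self_eq hsm hs s.2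
    ((Units.coeHom R).isOfFinOrder (isOfFinOrder_of_finite (star g * g))) (.star_mul_self (g : R))
    (commute_star_mul_self_of_semiconjBy s.2 (pow_mem s.2 q) hgs) hpz
  let u : unitary R := ⟨g * (↑y⁻¹ : R), (Units.mul_inv_mem_unitary g y).mpr (Units.ext hy.symm)⟩
  exact isConj_iff.mpr ⟨u, mul_inv_eq_iff_eq_mul.mpr
    (Subtype.ext (hgs.mul_left hys.units_inv_left))⟩

end Unitary

section Symplectic

open Matrix

variable {l R : Type*} [Fintype l] [DecidableEq l] [CommRing R]

/-- The involution `M ↦ J⁻¹ Mᵀ J` on `2n × 2n` matrices, i.e. the adjoint with respect to the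
symplectic form, for which the symplectic group is the unitary group. -/
abbrev symplecticStarRing : StarRing (Matrix (l ⊕ l) (l ⊕ l) R) where
  star M := -(J l R * Mᵀ * J l R)
  star_involutive M := by
    simp only [transpose_neg, transpose_mul, transpose_transpose, J_transpose]
    linear_combination (norm := noncomm_ring) J_squared l R * M * J l R * J l R - M * J_squared l R
  star_mul M N := by
    rw [transpose_mul]
    linear_combination (norm := noncomm_ring)
      -(J l R * Nᵀ * J_squared l R * Mᵀ * J l R)
  star_add M N := by
    rw [transpose_add]
    noncomm_ring

attribute [local instance] symplecticStarRing

lemma unitary_eq_symplecticGroup : unitary (Matrix (l ⊕ l) (l ⊕ l) R) = symplecticGroup l R := by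
  ext M
  rw [Unitary.mem_iff, mul_eq_one_comm, and_self, SymplecticGroup.mem_iff]
  change M * -(J l R * Mᵀ * J l R) = 1 ↔ _
  constructor <;> intro h
  · linear_combination (norm := noncomm_ring) h * J l R + M * J l R * Mᵀ * J_squared l R
  · linear_combination (norm := noncomm_ring) -h * J l R - J_squared l R

theorem isConj_pow_two_pow_of_odd_orderOf_general {K : Type*} [Field K] [Fintype K] [CharP K 2]
    (s : symplecticGroup l K) (hs : Odd (orderOf s)) (k : ℕ) :
    IsConj s (s ^ Fintype.card K ^ k) := by
  refine isConj_pow_pow_of_isConj_pow ?_ k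
  rcases isEmpty_or_nonempty l with hl | hl
  · rw [Subsingleton.elim (s ^ Fintype.card K) s]
  have : CharP (Matrix (l ⊕ l) (l ⊕ l) K) 2 := Matrix.charP 2
  let e : unitary (Matrix (l ⊕ l) (l ⊕ l) K) ≃* symplecticGroup l K :=
    MulEquiv.submonoidCongr unitary_eq_symplecticGroup
  have hGL : IsConj (s : Matrix (l ⊕ l) (l ⊕ l) K) (s ^ Fintype.card K) := by
    refine isConj_pow_card_of_matrix_pow_eq_one (m := orderOf s) ?_ ?_
    · rw [CharTwo.natCast_eq_ite, if_neg (Nat.not_even_iff_odd.mpr hs)]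
      exact one_ne_zero
    · rw [← SubmonoidClass.coe_pow, pow_orderOf_eq_one, OneMemClass.coe_one]
  have hunitary : IsConj (e.symm s) (e.symm s ^ Fintype.card K) :=
    isConj_pow_of_isConj_coe (by rwa [MulEquiv.orderOf_eq]) hGL
  simpa using (e : _ →* symplecticGroup l K).map_isConj hunitary

end Symplectic

/-- Let `n ≥ 1` and let `s` be an element of odd order in the symplectic group
`Sp_{2n}(𝔽₂)`. Then for every natural number `k`, the elements `s` and `s ^ (2 ^ k)`
are conjugate in `Sp_{2n}(𝔽₂)`. -/
theorem isConj_pow_two_pow_of_odd_orderOf (n : ℕ) (hn : 1 ≤ n)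
    (s : Matrix.symplecticGroup (Fin n) (ZMod 2)) (hs : Odd (orderOf s)) (k : ℕ) :
    IsConj s (s ^ (2 ^ k)) := by
  simpa only [ZMod.card] using isConj_pow_two_pow_of_odd_orderOf_general s hs k
end

section
/- Let n ≥ 2 and let R be a Sylow 2-subgroup of Sp_{2n}(F_2). Then the abelianization R/[R,R] is isomorphic, as a group, to the elementary abelian group (ZMod 2)^(n+1). -/
/-!
Order the standard symplectic basis as `e_1, …, e_n, f_n, …, f_1` and let `U` be the group of
symplectic matrices that are unitriangular in this order. Over `𝔽_q` it is a Sylow subgroup in the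
defining characteristic `p`: its elements have characteristic polynomial `(X - 1) ^ (2 * n)`, hence
`p`-power order, and the normalizer of `U` consists of triangular matrices, whose elements of
`p`-power order lie in `U`.

Every `M ∈ U` is a product of `[1, S; 0, 1]` and `[A, 0; 0, A⁻ᵀ]` for a unique symmetric `S` and
unitriangular `A`, and `S(MN) = S(M) + A(M) S(N) A(M)ᵀ`. Hence the `n - 1` superdiagonal entries
of `A` and the entry `S_nn` are additive, and so is `S_mm + S_mn` for `m = n - 1` over `𝔽₂`, where
`a ^ 2 = a` and `2 = 0`. Conversely, modulo commutators every root element is trivial or equal to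
one of `n + 1` root elements dual to these homomorphisms. These are involutions and generate the
abelianization, so they form a basis of it.
-/

open Matrix
open scoped commutatorElement

/-! ### Unitriangular matrices -/

lemma blockTriangular_mul_apply_self {m α R : Type*} [Fintype m] [LinearOrder α]
    [NonUnitalNonAssocSemiring R] {b : m → α} (hb : Function.Injective b) {M N : Matrix m m R}
    (hM : M.BlockTriangular b) (hN : N.BlockTriangular b) (i : m) :
    (M * N) i i = M i i * N i i := by
  rw [mul_apply]
  refine Fintype.sum_eq_single i fun k hk => ?_
  rcases (hb.ne hk).lt_or_gt with h | h
  · rw [hM h, zero_mul]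
  · rw [hN h, mul_zero]

lemma blockTriangular_pow_apply_self {m α R : Type*} [Fintype m] [DecidableEq m] [LinearOrder α]
    [Semiring R] {b : m → α} (hb : Function.Injective b) {M : Matrix m m R}
    (hM : M.BlockTriangular b) (k : ℕ) (i : m) : (M ^ k) i i = M i i ^ k := by
  induction k with
  | zero => simp
  | succ k ih => rw [pow_succ, blockTriangular_mul_apply_self hb (hM.pow k) hM, ih, pow_succ]

/-- `M` is upper unitriangular once its rows and columns are ordered along `b`; as in
`Matrix.BlockTriangular`, the order is transported along a map instead of being put on the index
type. -/
def IsUnitriangular {m α R : Type*} [LT α] [Zero R] [One R] (b : m → α) (M : Matrix m m R) : Prop :=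
  M.BlockTriangular b ∧ ∀ i, M i i = 1

namespace IsUnitriangular

variable {m α R : Type*} [LinearOrder α] {b : m → α}

lemma one [DecidableEq m] [Zero R] [One R] : IsUnitriangular b (1 : Matrix m m R) :=
  ⟨blockTriangular_one, one_apply_eq⟩

lemma mul [Fintype m] [NonAssocSemiring R] (hb : Function.Injective b) {M N : Matrix m m R}
    (hM : IsUnitriangular b M) (hN : IsUnitriangular b N) : IsUnitriangular b (M * N) :=
  ⟨hM.1.mul hN.1, fun i => by
    rw [blockTriangular_mul_apply_self hb hM.1 hN.1, hM.2, hN.2, one_mul]⟩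

lemma mul_apply_of_covBy [Fintype m] [NonAssocSemiring R] (hb : Function.Injective b)
    {M N : Matrix m m R} (hM : IsUnitriangular b M) (hN : IsUnitriangular b N) {i j : m}
    (hij : b i ⋖ b j) : (M * N) i j = M i j + N i j := by
  rw [mul_apply, Fintype.sum_eq_add i j (by rintro rfl; exact hij.lt.false), hM.2, hN.2, one_mul,
    mul_one, add_comm]
  rintro k ⟨hki, hkj⟩
  rcases (hb.ne hki).lt_or_gt with h | h
  · rw [hM.1 h, zero_mul]
  · rw [hN.1 ((hij.ge_of_gt h).lt_of_ne (hb.ne hkj).symm), mul_zero]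

lemma charpoly_eq [Fintype m] [DecidableEq m] [CommRing R] (hb : Function.Injective b)
    {M : Matrix m m R} (hM : IsUnitriangular b M) :
    M.charpoly = (Polynomial.X - 1) ^ Fintype.card m := by
  let _ : LinearOrder m := LinearOrder.lift' b hb
  rw [charpoly_of_isUpperTriangular M hM.1]
  simp [hM.2]

lemma det_eq_one [Fintype m] [DecidableEq m] [CommRing R] (hb : Function.Injective b)
    {M : Matrix m m R} (hM : IsUnitriangular b M) : M.det = 1 := by
  let _ : LinearOrder m := LinearOrder.lift' b hb
  rw [det_of_isUpperTriangular hM.1]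
  simp [hM.2]

lemma inv [Fintype m] [DecidableEq m] [CommRing R] (hb : Function.Injective b)
    {M : Matrix m m R} (hM : IsUnitriangular b M) : IsUnitriangular b M⁻¹ := by
  have hdet : IsUnit M.det := by simp [hM.det_eq_one hb]
  let _ : Invertible M := invertibleOfIsUnitDet M hdet
  have htri : M⁻¹.BlockTriangular b := blockTriangular_inv_of_blockTriangular hM.1
  refine ⟨htri, fun i => ?_⟩
  calc M⁻¹ i i = M i i * M⁻¹ i i := by rw [hM.2, one_mul]
    _ = (M * M⁻¹) i i := (blockTriangular_mul_apply_self hb hM.1 htri i).symm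
    _ = 1 := by rw [mul_nonsing_inv M hdet, one_apply_eq]

lemma exists_pow_prime_pow_eq_one [Fintype m] [DecidableEq m] [CommRing R] (p : ℕ) [Fact p.Prime]
    [CharP R p] (hb : Function.Injective b) {M : Matrix m m R} (hM : IsUnitriangular b M) :
    ∃ k, M ^ p ^ k = 1 := by
  refine ⟨Fintype.card m, ?_⟩
  have hfrob (k : ℕ) : (Polynomial.X - 1 : Polynomial R) ^ p ^ k = Polynomial.X ^ p ^ k - 1 := by
    rw [sub_pow_char_pow, one_pow]
  have hdvd : M.charpoly ∣ Polynomial.X ^ p ^ Fintype.card m - 1 := by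
    rw [hM.charpoly_eq hb, ← hfrob]
    exact pow_dvd_pow _ (Nat.lt_pow_self (Fact.out : p.Prime).one_lt).le
  have hroot := Polynomial.aeval_eq_zero_of_dvd_aeval_eq_zero hdvd M.aeval_self_charpoly
  simpa [sub_eq_zero] using hroot

end IsUnitriangular

lemma sum_single_filter_lt_apply {l α : Type*} [Fintype l] [LinearOrder l] [AddCommMonoid α]
    (A : Matrix l l α) (i j : l) :
    (∑ x : l × l with x.1 < x.2, single x.1 x.2 (A x.1 x.2)) i j = if i < j then A i j else 0 := by
  rw [Matrix.sum_apply, Finset.sum_filter, Fintype.sum_eq_single (i, j) fun x hx => ?_,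
    single_apply_same]
  rw [single_apply_of_ne _ _ _ _ _ fun h => hx (Prod.ext h.1 h.2), ite_self]

lemma IsUnitriangular.eq_one_add_sum_single {l R : Type*} [Fintype l] [LinearOrder l]
    [NonAssocSemiring R] {A : Matrix l l R} (hA : IsUnitriangular id A) :
    A = 1 + ∑ x : l × l with x.1 < x.2, single x.1 x.2 (A x.1 x.2) := by
  ext i j
  rw [Matrix.add_apply, sum_single_filter_lt_apply, one_apply]
  rcases lt_trichotomy i j with h | rfl | h
  · simp [h, h.ne]
  · simp [hA.2]
  · simpa [h.not_gt, h.ne'] using hA.1 h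

lemma mem_of_isUnitriangular_of_transvection_mem {l R : Type*} [Fintype l] [LinearOrder l]
    [CommRing R] {H : Subgroup (SpecialLinearGroup l R)}
    (hH : ∀ (i j : l) (hij : i < j) (c : R), SpecialLinearGroup.transvection hij.ne c ∈ H)
    {A : SpecialLinearGroup l R} (hA : IsUnitriangular id (A : Matrix l l R)) : A ∈ H := by
  -- Insert the entries in lexicographic order: `E_ij` with `(i, j)` maximal annihilates from the
  -- left all the `E_kl` already present.
  have key (s : Finset (l ×ₗ l)) (hs : ∀ x ∈ s, (ofLex x).1 < (ofLex x).2) :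
      ∃ g ∈ H, (g : Matrix l l R) =
        1 + ∑ x ∈ s, single (ofLex x).1 (ofLex x).2 (A (ofLex x).1 (ofLex x).2) := by
    induction s using Finset.induction_on_max with
    | empty => exact ⟨1, one_mem H, by simp⟩
    | insert x s hx ih =>
      obtain ⟨g, hg, hgs⟩ := ih fun y hy => hs y (Finset.mem_insert_of_mem hy)
      have hij := hs x (Finset.mem_insert_self x s)
      have hzero (c : R) : single (ofLex x).1 (ofLex x).2 c * ∑ y ∈ s,
          single (ofLex y).1 (ofLex y).2 (A (ofLex y).1 (ofLex y).2) = 0 := by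
        rw [Finset.mul_sum]
        refine Finset.sum_eq_zero fun y hy => single_mul_single_of_ne _ _ _ _ ?_ _
        exact ((Prod.Lex.monotone_fst_ofLex (hx y hy).le).trans_lt hij).ne'
      refine ⟨_, mul_mem (hH _ _ hij (A (ofLex x).1 (ofLex x).2)) hg, ?_⟩
      rw [Matrix.SpecialLinearGroup.coe_mul, SpecialLinearGroup.transvection_coe, hgs,
        Finset.sum_insert fun h => (hx x h).false, add_mul, mul_add, mul_add, hzero]
      simp [add_comm, add_left_comm]
  obtain ⟨g, hg, hgA⟩ := key {x | (ofLex x).1 < (ofLex x).2} (by simp)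
  suffices A = g from this ▸ hg
  exact Subtype.ext (hA.eq_one_add_sum_single.trans hgA.symm)

lemma isUnitriangular_transvection {l R : Type*} [Fintype l] [LinearOrder l] [CommRing R] {i j : l}
    (hij : i < j) (c : R) : IsUnitriangular id (SpecialLinearGroup.transvection hij.ne c).1 := by
  rw [SpecialLinearGroup.transvection_coe]
  refine ⟨blockTriangular_transvection (b := id) hij.le c, fun k => ?_⟩
  rw [Matrix.add_apply, one_apply_eq, single_apply_of_ne _ _ _ _ _ (by grind), add_zero]

/-! ### Sylow subgroups and abelianizations -/

lemma exists_sylow_eq_of_normalizer {G : Type*} [Group G] [Finite G] {p : ℕ} [Fact p.Prime]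
    {H : Subgroup G} (hH : IsPGroup p H)
    (hnorm : ∀ g ∈ Subgroup.normalizer (H : Set G), (∃ k, g ^ p ^ k = 1) → g ∈ H) :
    ∃ P : Sylow p G, (P : Subgroup G) = H := by
  obtain ⟨P, hHP⟩ := hH.exists_le_sylow
  refine ⟨P, le_antisymm ?_ hHP⟩
  have := P.isPGroup'.isNilpotent
  have hP : NormalizerCondition P := Group.normalizerCondition_of_isNilpotent
  rw [normalizerCondition_iff_only_full_group_self_normalizing] at hP
  rw [← Subgroup.subgroupOf_eq_top]
  refine hP _ (le_antisymm (fun g hg => ?_) Subgroup.le_normalizer)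
  rw [← Subgroup.subgroupOf_normalizer_eq hHP] at hg
  obtain ⟨k, hk⟩ := P.isPGroup' g
  exact hnorm g hg ⟨k, congrArg Subtype.val hk⟩

lemma bijective_of_map_generators_eq_single {A ι : Type*} [CommGroup A] [Finite ι] [DecidableEq ι]
    {n : ℕ} {g : ι → A} (hgen : Subgroup.closure (Set.range g) = ⊤) (hpow : ∀ i, g i ^ n = 1)
    {φ : A →* Multiplicative (ι → ZMod n)}
    (hφ : ∀ i, φ (g i) = Multiplicative.ofAdd (Pi.single i 1)) : Function.Bijective φ := by
  cases nonempty_fintype ι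
  have hprod (k : ι → ℤ) : (φ (∏ i, g i ^ k i)).toAdd = fun i => (k i : ZMod n) := by
    simp only [map_prod, map_zpow, hφ, toAdd_prod, toAdd_zpow, toAdd_ofAdd]
    ext i
    simp [Finset.sum_apply, Pi.single_apply]
  refine ⟨(injective_iff_map_eq_one φ).2 fun a ha => ?_, fun v => ?_⟩
  · obtain ⟨k, rfl⟩ := Subgroup.exists_of_mem_closure_range g a (hgen ▸ Subgroup.mem_top a)
    refine Finset.prod_eq_one fun i _ => ?_
    have hki : (k i : ZMod n) = 0 := by
      rw [← congrFun (hprod k) i, ha, toAdd_one, Pi.zero_apply]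
    obtain ⟨q, hq⟩ := (ZMod.intCast_zmod_eq_zero_iff_dvd _ _).1 hki
    rw [hq, _root_.zpow_mul, zpow_natCast, hpow, _root_.one_zpow]
  · refine ⟨∏ i, g i ^ (ZMod.cast (v.toAdd i) : ℤ), Multiplicative.toAdd.injective ?_⟩
    rw [hprod]
    simp

lemma closure_range_abelianization_of_eq_top {G ι : Type*} [Group G] {H : Subgroup G} {g : ι → H}
    (hg : H ≤ Subgroup.closure (Set.range fun i => (g i : G)) ⊔ ⁅H, H⁆) :
    Subgroup.closure (Set.range fun i => Abelianization.of (g i)) = ⊤ := by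
  have hsup : Subgroup.closure (Set.range g) ⊔ commutator H = ⊤ := by
    refine Subgroup.map_injective H.subtype_injective (le_antisymm ?_ ?_)
    · exact Subgroup.map_mono le_top
    · rw [Subgroup.map_sup, Subgroup.map_subtype_commutator, MonoidHom.map_closure,
        ← Set.range_comp, ← MonoidHom.range_eq_map, Subgroup.range_subtype]
      exact hg
  have hsurj : (Abelianization.of (G := H)).range = ⊤ :=
    MonoidHom.range_eq_top.2 QuotientGroup.mk_surjective
  rw [Set.range_comp' Abelianization.of g, ← MonoidHom.map_closure, ← hsurj,
    Subgroup.map_eq_range_iff, Abelianization.ker_of, codisjoint_iff, hsup]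

/-! ### The Siegel parabolic subgroup -/

lemma isSymm_single_self {l α : Type*} [DecidableEq l] [Zero α] (i : l) (c : α) :
    (single i i c).IsSymm :=
  transpose_single ..

lemma isSymm_mul_mul_transpose {m n α : Type*} [Fintype n] [CommSemiring α] (A : Matrix m n α)
    {S : Matrix n n α} (hS : S.IsSymm) : (A * S * Aᵀ).IsSymm := by
  rw [IsSymm, transpose_mul, transpose_mul, transpose_transpose, hS.eq, Matrix.mul_assoc]

lemma exists_isSymm_row_eq_single {l R : Type*} [DecidableEq l] [AddCommMonoidWithOne R] (i j : l) :
    ∃ S : Matrix l l R, S.IsSymm ∧ S i = Pi.single j 1 := by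
  rcases eq_or_ne i j with rfl | hij
  · refine ⟨single i i 1, isSymm_single_self i 1, ?_⟩
    ext k
    simp [single_apply, Pi.single_apply, eq_comm]
  · refine ⟨single i j 1 + single j i 1, ?_, ?_⟩
    · simp [IsSymm, add_comm]
    · ext k
      simp [single_apply, Pi.single_apply, hij.symm, eq_comm]

section SiegelParabolic

variable {l R : Type*} [Fintype l] [DecidableEq l] [CommRing R]

lemma fromBlocks_zero₂₁_mem_symplecticGroup_iff {A B D : Matrix l l R} :
    fromBlocks A B 0 D ∈ symplecticGroup l R ↔ (B * Aᵀ).IsSymm ∧ A * Dᵀ = 1 := by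
  rw [← SymplecticGroup.transpose_mem_iff, fromBlocks_transpose, SymplecticGroup.fromBlocks_mem_iff]
  simp [IsSymm]

/-- The Levi factor `A ↦ diag(A, A⁻ᵀ)` of the Siegel parabolic subgroup. -/
def symplecticLevi : SpecialLinearGroup l R →* symplecticGroup l R where
  toFun A := ⟨fromBlocks A 0 0 (A⁻¹ : SpecialLinearGroup l R)ᵀ, by
    rw [fromBlocks_zero₂₁_mem_symplecticGroup_iff, transpose_transpose,
      ← Matrix.SpecialLinearGroup.coe_mul, mul_inv_cancel]
    simp⟩
  map_one' := by simp
  map_mul' A B := by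
    ext1
    simp [fromBlocks_multiply, -SpecialLinearGroup.coe_inv]

lemma coe_symplecticLevi (A : SpecialLinearGroup l R) :
    (symplecticLevi A).1 = fromBlocks A.1 0 0 (A⁻¹).1ᵀ :=
  rfl

lemma coe_symplecticLevi_transvection {i j : l} (hij : i ≠ j) (c : R) :
    (symplecticLevi (SpecialLinearGroup.transvection hij c)).1 =
      fromBlocks (1 + single i j c) 0 0 (1 + single j i (-c)) := by
  rw [coe_symplecticLevi, SpecialLinearGroup.transvection_inv, SpecialLinearGroup.transvection_coe,
    SpecialLinearGroup.transvection_coe, transpose_add, transpose_one, transpose_single]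

/-- The elements of the unipotent radical of the Siegel parabolic subgroup. -/
def symplecticShear (S : Matrix l l R) (hS : S.IsSymm) : symplecticGroup l R :=
  ⟨fromBlocks 1 S 0 1, by simpa [fromBlocks_zero₂₁_mem_symplecticGroup_iff] using hS⟩

lemma coe_symplecticShear {S : Matrix l l R} (hS : S.IsSymm) :
    (symplecticShear S hS).1 = fromBlocks 1 S 0 1 :=
  rfl

lemma symplecticShear_zero : symplecticShear (0 : Matrix l l R) isSymm_zero = 1 :=
  Subtype.ext fromBlocks_one

lemma symplecticShear_add {S T : Matrix l l R} (hS : S.IsSymm) (hT : T.IsSymm) :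
    symplecticShear (S + T) (hS.add hT) = symplecticShear S hS * symplecticShear T hT :=
  Subtype.ext (by simp [coe_symplecticShear, fromBlocks_multiply, add_comm])

lemma symplecticShear_neg {S : Matrix l l R} (hS : S.IsSymm) :
    symplecticShear (-S) hS.neg = (symplecticShear S hS)⁻¹ := by
  rw [eq_inv_iff_mul_eq_one, ← symplecticShear_add, ← symplecticShear_zero]
  simp

lemma symplecticLevi_mul_symplecticShear (A : SpecialLinearGroup l R) {S : Matrix l l R}
    (hS : S.IsSymm) : symplecticLevi A * symplecticShear S hS =
      symplecticShear (A.1 * S * A.1ᵀ) (isSymm_mul_mul_transpose _ hS) * symplecticLevi A := by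
  have hA : A.1ᵀ * (A⁻¹).1ᵀ = 1 := by
    rw [← transpose_mul, ← Matrix.SpecialLinearGroup.coe_mul, inv_mul_cancel]
    simp
  ext1
  rw [Submonoid.coe_mul, Submonoid.coe_mul, coe_symplecticLevi, coe_symplecticShear,
    coe_symplecticShear, fromBlocks_multiply, fromBlocks_multiply]
  simp [Matrix.mul_assoc, hA, -Matrix.SpecialLinearGroup.coe_inv]

lemma commutator_symplecticLevi_symplecticShear (A : SpecialLinearGroup l R) {S : Matrix l l R}
    (hS : S.IsSymm) : ⁅symplecticLevi A, symplecticShear S hS⁆ =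
      symplecticShear (A.1 * S * A.1ᵀ - S) ((isSymm_mul_mul_transpose _ hS).sub hS) := by
  rw [commutatorElement_def, symplecticLevi_mul_symplecticShear, mul_inv_cancel_right,
    ← symplecticShear_neg, ← symplecticShear_add]
  simp only [sub_eq_add_neg]

/-- The symmetric matrices whose shear lies in `H`, as an additive group. -/
def shearsIn (H : Subgroup (symplecticGroup l R)) : AddSubgroup (Matrix l l R) where
  carrier := {S | ∃ hS : S.IsSymm, symplecticShear S hS ∈ H}
  zero_mem' := ⟨isSymm_zero, symplecticShear_zero (l := l) (R := R) ▸ one_mem H⟩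
  add_mem' := fun ⟨hS, hSH⟩ ⟨hT, hTH⟩ =>
    ⟨hS.add hT, symplecticShear_add hS hT ▸ mul_mem hSH hTH⟩
  neg_mem' := fun ⟨hS, hSH⟩ => ⟨hS.neg, symplecticShear_neg hS ▸ inv_mem hSH⟩

end SiegelParabolic

/-! ### The unitriangular symplectic group -/

section Flag

variable {l R : Type*}

/-- Orders the standard symplectic basis as the flag `e_1 < ⋯ < e_n < f_n < ⋯ < f_1`, whose partial
spans are isotropic or coisotropic, so that the isometries preserving it form a Borel subgroup. -/
def flagOrder : l ⊕ l → l ⊕ₗ lᵒᵈ := toLex ∘ Sum.map id OrderDual.toDual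

lemma flagOrder_injective : Function.Injective (flagOrder (l := l)) :=
  toLex.injective.comp (Function.injective_id.sumMap OrderDual.toDual.injective)

variable [LinearOrder l]

lemma isUnitriangular_fromBlocks [Zero R] [One R] {A B D : Matrix l l R}
    (hA : IsUnitriangular id A) (hD : IsUnitriangular id Dᵀ) :
    IsUnitriangular flagOrder (fromBlocks A B 0 D) := by
  refine ⟨?_, ?_⟩
  · rintro (i | i) (j | j) hij
    · exact hA.1 (Sum.Lex.inl_lt_inl_iff.1 hij)
    · exact (Sum.Lex.not_inr_lt_inl hij).elim
    · rfl
    · exact hD.1 (OrderDual.toDual_lt_toDual.1 (Sum.Lex.inr_lt_inr_iff.1 hij))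
  · rintro (i | i)
    · exact hA.2 i
    · exact hD.2 i

lemma IsUnitriangular.toBlocks₁₁ [Zero R] [One R] {M : Matrix (l ⊕ l) (l ⊕ l) R}
    (hM : IsUnitriangular flagOrder M) : IsUnitriangular id M.toBlocks₁₁ :=
  ⟨fun _ _ hij => hM.1 (Sum.Lex.inl_lt_inl_iff.2 hij), fun i => hM.2 (Sum.inl i)⟩

lemma IsUnitriangular.toBlocks₂₁_eq_zero [Zero R] [One R] {M : Matrix (l ⊕ l) (l ⊕ l) R}
    (hM : IsUnitriangular flagOrder M) : M.toBlocks₂₁ = 0 := by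
  ext i j
  exact hM.1 (Sum.Lex.inl_lt_inr _ _)

end Flag

section Symplectic

variable {l R : Type*} [Fintype l] [LinearOrder l] [CommRing R]

variable (l R) in
/-- The unipotent radical of the Borel subgroup stabilizing the flag `flagOrder`: the symplectic
matrices that are unitriangular along it. -/
def symplecticUnipotent : Subgroup (symplecticGroup l R) where
  carrier := {M | IsUnitriangular flagOrder (M : Matrix (l ⊕ l) (l ⊕ l) R)}
  one_mem' := IsUnitriangular.one
  mul_mem' := IsUnitriangular.mul flagOrder_injective
  inv_mem' {M} hM := by
    rw [Set.mem_ofPred_eq, SymplecticGroup.coe_inv']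
    exact hM.inv flagOrder_injective

lemma symplecticLevi_mem_symplecticUnipotent {A : SpecialLinearGroup l R}
    (hA : IsUnitriangular id (A : Matrix l l R)) : symplecticLevi A ∈ symplecticUnipotent l R := by
  refine isUnitriangular_fromBlocks hA ?_
  have hinv : A.1⁻¹ = (A⁻¹).1 := inv_eq_right_inv (by
    rw [← Matrix.SpecialLinearGroup.coe_mul, mul_inv_cancel, Matrix.SpecialLinearGroup.coe_one])
  rw [transpose_transpose, ← hinv]
  exact hA.inv Function.injective_id

lemma symplecticShear_mem_symplecticUnipotent {S : Matrix l l R} (hS : S.IsSymm) :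
    symplecticShear S hS ∈ symplecticUnipotent l R := by
  refine isUnitriangular_fromBlocks IsUnitriangular.one ?_
  rw [transpose_one]
  exact IsUnitriangular.one

lemma exists_mem_symplecticUnipotent_row_eq {x y : l ⊕ l} (hxy : flagOrder x < flagOrder y) :
    ∃ M ∈ symplecticUnipotent l R, M.1 x = Pi.single x 1 + Pi.single y 1 := by
  match x, y with
  | .inl i, .inl j =>
    have hij : i < j := Sum.Lex.inl_lt_inl_iff.1 hxy
    refine ⟨_, symplecticLevi_mem_symplecticUnipotent (isUnitriangular_transvection hij 1), ?_⟩
    ext (k | k)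
    · simp [coe_symplecticLevi_transvection, one_apply, single_apply, Pi.single_apply, eq_comm]
    · simp [coe_symplecticLevi_transvection]
  | .inr j, .inr i =>
    have hij : i < j := OrderDual.toDual_lt_toDual.1 (Sum.Lex.inr_lt_inr_iff.1 hxy)
    refine ⟨_, symplecticLevi_mem_symplecticUnipotent (isUnitriangular_transvection hij (-1)), ?_⟩
    ext (k | k)
    · simp [coe_symplecticLevi_transvection]
    · simp [coe_symplecticLevi_transvection, one_apply, single_apply, Pi.single_apply, eq_comm]
  | .inl i, .inr j =>
    obtain ⟨S, hS, hrow⟩ := exists_isSymm_row_eq_single (R := R) i j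
    refine ⟨_, symplecticShear_mem_symplecticUnipotent hS, ?_⟩
    ext (k | k)
    · simp [coe_symplecticShear, one_apply, Pi.single_apply, eq_comm]
    · simp [coe_symplecticShear, hrow, Pi.single_apply]
  | .inr i, .inl j => exact (Sum.Lex.not_inr_lt_inl hxy).elim

lemma blockTriangular_of_mem_normalizer_symplecticUnipotent {g : symplecticGroup l R}
    (hg : g ∈ Subgroup.normalizer (symplecticUnipotent l R : Set (symplecticGroup l R))) :
    g.1.BlockTriangular flagOrder := by
  suffices h : ∀ a x, flagOrder x = a → ∀ y, a < flagOrder y → g.1 y x = 0 from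
    fun y x hxy => h _ x rfl y hxy
  intro a
  induction a using WellFoundedLT.induction with
  | ind a ih =>
  rintro x rfl y hxy
  obtain ⟨M, hM, hrow⟩ := exists_mem_symplecticUnipotent_row_eq (R := R) hxy
  have hN : g⁻¹ * M * g ∈ symplecticUnipotent l R :=
    (Subgroup.mem_normalizer_iff''.1 hg M).1 hM
  set N := g⁻¹ * M * g
  have hcomm : M.1 * g.1 = g.1 * N.1 :=
    congrArg Subtype.val (by simp [N, mul_assoc] : M * g = g * N)
  have hleft : (M.1 * g.1) x x = g.1 x x + g.1 y x := by
    rw [Matrix.mul_apply_eq_vecMul, hrow]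
    simp [add_vecMul]
  have hright : (g.1 * N.1) x x = g.1 x x := by
    rw [mul_apply, Fintype.sum_eq_single x, hN.2, mul_one]
    intro z hz
    rcases (flagOrder_injective.ne hz).lt_or_gt with h | h
    · rw [ih _ h z rfl x h, zero_mul]
    · rw [hN.1 h, mul_zero]
  rw [hcomm, hright] at hleft
  simpa using hleft.symm

lemma isPGroup_symplecticUnipotent (p : ℕ) [Fact p.Prime] [CharP R p] :
    IsPGroup p (symplecticUnipotent l R) := fun M => by
  obtain ⟨k, hk⟩ := M.2.exists_pow_prime_pow_eq_one p flagOrder_injective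
  exact ⟨k, Subtype.ext (Subtype.ext hk)⟩

lemma exists_sylow_eq_symplecticUnipotent [Finite R] [IsReduced R] (p : ℕ) [Fact p.Prime]
    [CharP R p] :
    ∃ P : Sylow p (symplecticGroup l R), (P : Subgroup _) = symplecticUnipotent l R := by
  refine exists_sylow_eq_of_normalizer (isPGroup_symplecticUnipotent p) fun g hg ⟨k, hk⟩ => ?_
  have htri := blockTriangular_of_mem_normalizer_symplecticUnipotent hg
  refine ⟨htri, fun x => iterateFrobenius_inj R p k ?_⟩
  rw [map_one, iterateFrobenius_def, ← blockTriangular_pow_apply_self flagOrder_injective htri]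
  exact (congrFun₂ (congrArg Subtype.val hk) x x).trans (one_apply_eq x)

lemma isSymm_toBlocks₁₂_mul_transpose_toBlocks₁₁ (M : symplecticUnipotent l R) :
    (M.1.1.toBlocks₁₂ * M.1.1.toBlocks₁₁ᵀ).IsSymm := by
  have hM := M.1.2
  rw [← fromBlocks_toBlocks M.1.1, M.2.toBlocks₂₁_eq_zero] at hM
  exact (fromBlocks_zero₂₁_mem_symplecticGroup_iff.1 hM).1

lemma toBlocks₁₁_mul_transpose_toBlocks₂₂ (M : symplecticUnipotent l R) :
    M.1.1.toBlocks₁₁ * M.1.1.toBlocks₂₂ᵀ = 1 := by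
  have hM := M.1.2
  rw [← fromBlocks_toBlocks M.1.1, M.2.toBlocks₂₁_eq_zero] at hM
  exact (fromBlocks_zero₂₁_mem_symplecticGroup_iff.1 hM).2

lemma coe_mul_symplecticUnipotent (M N : symplecticUnipotent l R) :
    (M * N).1.1 = fromBlocks (M.1.1.toBlocks₁₁ * N.1.1.toBlocks₁₁)
      (M.1.1.toBlocks₁₁ * N.1.1.toBlocks₁₂ + M.1.1.toBlocks₁₂ * N.1.1.toBlocks₂₂)
      0 (M.1.1.toBlocks₂₂ * N.1.1.toBlocks₂₂) := by
  rw [Subgroup.coe_mul, Submonoid.coe_mul, ← fromBlocks_toBlocks M.1.1, ← fromBlocks_toBlocks N.1.1,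
    M.2.toBlocks₂₁_eq_zero, N.2.toBlocks₂₁_eq_zero, fromBlocks_multiply]
  simp

/-- The Levi component `A` of `M = shear S * levi A`. -/
def leviPart : symplecticUnipotent l R →* SpecialLinearGroup l R where
  toFun M := ⟨M.1.1.toBlocks₁₁, M.2.toBlocks₁₁.det_eq_one Function.injective_id⟩
  map_one' := Subtype.ext (toBlocks₁₁_diagonal 1)
  map_mul' M N := Subtype.ext (congrArg toBlocks₁₁ (coe_mul_symplecticUnipotent M N))

/-- The symmetric matrix `S` in `M = shear S * levi A`. -/
def shearPart (M : symplecticUnipotent l R) : Matrix l l R :=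
  M.1.1.toBlocks₁₂ * M.1.1.toBlocks₁₁ᵀ

lemma coe_leviPart (M : symplecticUnipotent l R) : (leviPart M).1 = M.1.1.toBlocks₁₁ :=
  rfl

lemma isSymm_shearPart (M : symplecticUnipotent l R) : (shearPart M).IsSymm :=
  isSymm_toBlocks₁₂_mul_transpose_toBlocks₁₁ M

lemma isUnitriangular_leviPart (M : symplecticUnipotent l R) :
    IsUnitriangular id (leviPart M).1 :=
  M.2.toBlocks₁₁

lemma symplecticShear_shearPart_mul_symplecticLevi_leviPart (M : symplecticUnipotent l R) :
    symplecticShear (shearPart M) (isSymm_shearPart M) * symplecticLevi (leviPart M) = M := by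
  have hD : (leviPart M)⁻¹.1 = M.1.1.toBlocks₂₂ᵀ :=
    left_inv_eq_right_inv (congrArg Subtype.val (inv_mul_cancel (leviPart M)))
      (toBlocks₁₁_mul_transpose_toBlocks₂₂ M)
  have hAD : M.1.1.toBlocks₁₁ᵀ * M.1.1.toBlocks₂₂ = 1 := by
    rw [← transpose_eq_one, transpose_mul, transpose_transpose, mul_eq_one_comm]
    exact toBlocks₁₁_mul_transpose_toBlocks₂₂ M
  ext1
  rw [Submonoid.coe_mul, coe_symplecticLevi, hD, coe_leviPart, coe_symplecticShear, shearPart,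
    fromBlocks_multiply, transpose_transpose]
  conv_rhs => rw [← fromBlocks_toBlocks M.1.1, M.2.toBlocks₂₁_eq_zero]
  simp [Matrix.mul_assoc, hAD]

lemma shearPart_mul (M N : symplecticUnipotent l R) :
    shearPart (M * N) = shearPart M + (leviPart M).1 * shearPart N * (leviPart M).1ᵀ := by
  have hDA : N.1.1.toBlocks₂₂ * N.1.1.toBlocks₁₁ᵀ = 1 := by
    rw [← transpose_eq_one, transpose_mul, transpose_transpose]
    exact toBlocks₁₁_mul_transpose_toBlocks₂₂ N
  simp only [shearPart, coe_leviPart]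
  rw [coe_mul_symplecticUnipotent, toBlocks_fromBlocks₁₁, toBlocks_fromBlocks₁₂, transpose_mul,
    add_mul, Matrix.mul_assoc M.1.1.toBlocks₁₂, ← Matrix.mul_assoc N.1.1.toBlocks₂₂, hDA,
    Matrix.one_mul, add_comm]
  simp only [Matrix.mul_assoc]

lemma leviPart_symplecticLevi {A : SpecialLinearGroup l R}
    (hA : symplecticLevi A ∈ symplecticUnipotent l R) : leviPart ⟨symplecticLevi A, hA⟩ = A :=
  Subtype.ext (toBlocks_fromBlocks₁₁ ..)

lemma leviPart_symplecticShear {S : Matrix l l R} {hS : S.IsSymm}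
    (hU : symplecticShear S hS ∈ symplecticUnipotent l R) :
    leviPart ⟨symplecticShear S hS, hU⟩ = 1 :=
  Subtype.ext (toBlocks_fromBlocks₁₁ ..)

lemma shearPart_symplecticLevi {A : SpecialLinearGroup l R}
    (hA : symplecticLevi A ∈ symplecticUnipotent l R) : shearPart ⟨symplecticLevi A, hA⟩ = 0 := by
  rw [shearPart, coe_symplecticLevi, toBlocks_fromBlocks₁₂, Matrix.zero_mul]

lemma shearPart_symplecticShear {S : Matrix l l R} {hS : S.IsSymm}
    (hU : symplecticShear S hS ∈ symplecticUnipotent l R) :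
    shearPart ⟨symplecticShear S hS, hU⟩ = S := by
  rw [shearPart, coe_symplecticShear, toBlocks_fromBlocks₁₂, toBlocks_fromBlocks₁₁, transpose_one,
    Matrix.mul_one]

end Symplectic

/-! ### Generation modulo commutators -/

lemma commutator_transvection {l R : Type*} [Fintype l] [DecidableEq l] [CommRing R] {i j k : l}
    (hij : i ≠ j) (hjk : j ≠ k) (hik : i ≠ k) (a b : R) :
    ⁅SpecialLinearGroup.transvection hij a, SpecialLinearGroup.transvection hjk b⁆ =
      SpecialLinearGroup.transvection hik (a * b) := by
  rw [commutatorElement_def, mul_inv_eq_iff_eq_mul, mul_inv_eq_iff_eq_mul]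
  ext1
  simp [SpecialLinearGroup.transvection_coe, mul_add, add_mul, hjk.symm, hik.symm]
  abel

lemma specialLinearGroup_transvection_zero {l R : Type*} [Fintype l] [DecidableEq l] [CommRing R]
    {i j : l} (hij : i ≠ j) : SpecialLinearGroup.transvection hij (0 : R) = 1 :=
  Subtype.ext (transvection_zero i j)

lemma mem_of_isSymm_of_single_mem {l α : Type*} [Finite l] [LinearOrder l] [AddCommGroup α]
    {V : AddSubgroup (Matrix l l α)} (hdiag : ∀ i c, single i i c ∈ V)
    (hoffdiag : ∀ i j, i < j → ∀ c, single i j c + single j i c ∈ V) {S : Matrix l l α}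
    (hS : S.IsSymm) : S ∈ V := by
  cases nonempty_fintype l
  have hsum : S = ∑ i, single i i (S i i) + ∑ x : l × l with x.1 < x.2,
      (single x.1 x.2 (S x.1 x.2) + single x.2 x.1 (S x.1 x.2)) := by
    have htranspose : ∑ x : l × l with x.1 < x.2, single x.2 x.1 (S x.1 x.2) =
        (∑ x : l × l with x.1 < x.2, single x.1 x.2 (S x.1 x.2))ᵀ := by
      simp [transpose_sum]
    ext i j
    rw [Finset.sum_add_distrib, htranspose, sum_single_eq_diagonal, Matrix.add_apply,
      Matrix.add_apply, transpose_apply, sum_single_filter_lt_apply, sum_single_filter_lt_apply,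
      hS.apply i j, diagonal_apply]
    rcases lt_trichotomy i j with h | rfl | h
    · simp [h, h.ne, h.not_gt]
    · simp
    · simp [h, h.ne', h.not_gt]
  rw [hsum]
  refine add_mem (sum_mem fun i _ => hdiag i _) (sum_mem fun x hx => hoffdiag _ _ ?_ _)
  exact (Finset.mem_filter.1 hx).2

section Generation

variable {l R : Type*} [Fintype l] [LinearOrder l] [CommRing R] {H : Subgroup (symplecticGroup l R)}

lemma symplecticLevi_transvection_mem
    (hcomm : ⁅symplecticUnipotent l R, symplecticUnipotent l R⁆ ≤ H)
    (hsimple : ∀ (i j : l) (hij : i ⋖ j) (c : R),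
      symplecticLevi (SpecialLinearGroup.transvection hij.lt.ne c) ∈ H)
    {i j : l} (hij : i < j) (c : R) :
    symplecticLevi (SpecialLinearGroup.transvection hij.ne c) ∈ H := by
  by_cases hcov : i ⋖ j
  · exact hsimple i j hcov c
  · obtain ⟨k, hik, hkj⟩ := (not_covBy_iff hij).1 hcov
    rw [← mul_one c, ← commutator_transvection hik.ne hkj.ne hij.ne, map_commutatorElement]
    exact hcomm (Subgroup.commutator_mem_commutator
      (symplecticLevi_mem_symplecticUnipotent (isUnitriangular_transvection hik c))
      (symplecticLevi_mem_symplecticUnipotent (isUnitriangular_transvection hkj 1)))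

lemma transvection_mul_mul_transpose_sub_mem_shearsIn
    (hcomm : ⁅symplecticUnipotent l R, symplecticUnipotent l R⁆ ≤ H) {i j : l} (hij : i < j)
    {S : Matrix l l R} (hS : S.IsSymm) :
    transvection i j 1 * S * (transvection i j 1)ᵀ - S ∈ shearsIn H := by
  have hmem := hcomm (Subgroup.commutator_mem_commutator
    (symplecticLevi_mem_symplecticUnipotent (isUnitriangular_transvection hij 1))
    (symplecticShear_mem_symplecticUnipotent hS))
  rw [commutator_symplecticLevi_symplecticShear] at hmem
  exact ⟨_, hmem⟩

lemma single_self_add_single_add_single_mem_shearsIn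
    (hcomm : ⁅symplecticUnipotent l R, symplecticUnipotent l R⁆ ≤ H) {i j : l} (hij : i < j)
    (c : R) : single i i c + (single i j c + single j i c) ∈ shearsIn H := by
  convert transvection_mul_mul_transpose_sub_mem_shearsIn hcomm hij
    (isSymm_single_self j c) using 1
  simp [transvection, mul_add, add_mul]
  abel

lemma single_add_single_mem_shearsIn
    (hcomm : ⁅symplecticUnipotent l R, symplecticUnipotent l R⁆ ≤ H) {i j k : l} (hij : i < j)
    (hkj : k ≠ j) (c : R) : single i k c + single k i c ∈ shearsIn H := by
  have hS : (single j k c + single k j c).IsSymm := by simp [IsSymm, add_comm]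
  convert transvection_mul_mul_transpose_sub_mem_shearsIn hcomm hij hS using 1
  simp [transvection, mul_add, add_mul, hkj, hkj.symm]
  abel

variable [OrderTop l]

lemma single_self_mem_shearsIn (hcomm : ⁅symplecticUnipotent l R, symplecticUnipotent l R⁆ ≤ H)
    {p : l} (hp : p ⋖ ⊤) (htop : ∀ c, single ⊤ ⊤ c ∈ shearsIn H)
    (hpred : ∀ c, single p p c ∈ shearsIn H) (i : l) (c : R) : single i i c ∈ shearsIn H := by
  rcases eq_or_ne i ⊤ with rfl | hi
  · exact htop c
  rcases eq_or_ne i p with rfl | hip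
  · exact hpred c
  have hlt : i < p := hp.le_of_lt hi.lt_top |>.lt_of_ne hip
  have hoff := single_add_single_mem_shearsIn hcomm hlt hp.lt.ne' c
  exact (AddSubgroup.add_mem_cancel_right _ hoff).1
    (single_self_add_single_add_single_mem_shearsIn hcomm hi.lt_top c)

lemma mem_shearsIn_of_isSymm (hcomm : ⁅symplecticUnipotent l R, symplecticUnipotent l R⁆ ≤ H)
    {p : l} (hp : p ⋖ ⊤) (htop : ∀ c, single ⊤ ⊤ c ∈ shearsIn H)
    (hpred : ∀ c, single p p c ∈ shearsIn H) {S : Matrix l l R} (hS : S.IsSymm) :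
    S ∈ shearsIn H := by
  have hdiag := single_self_mem_shearsIn hcomm hp htop hpred
  refine mem_of_isSymm_of_single_mem hdiag (fun i j hij c => ?_) hS
  exact (AddSubgroup.add_mem_cancel_left _ (hdiag i c)).1
    (single_self_add_single_add_single_mem_shearsIn hcomm hij c)

lemma symplecticUnipotent_le_of_commutator_le
    (hcomm : ⁅symplecticUnipotent l R, symplecticUnipotent l R⁆ ≤ H) {p : l} (hp : p ⋖ ⊤)
    (htop : ∀ c, single ⊤ ⊤ c ∈ shearsIn H) (hpred : ∀ c, single p p c ∈ shearsIn H)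
    (hsimple : ∀ (i j : l) (hij : i ⋖ j) (c : R),
      symplecticLevi (SpecialLinearGroup.transvection hij.lt.ne c) ∈ H) :
    symplecticUnipotent l R ≤ H := fun M hM => by
  have hlevi : leviPart ⟨M, hM⟩ ∈ H.comap symplecticLevi :=
    mem_of_isUnitriangular_of_transvection_mem
      (fun _ _ hij c => symplecticLevi_transvection_mem hcomm hsimple hij c)
      (isUnitriangular_leviPart _)
  obtain ⟨_, hshear⟩ := mem_shearsIn_of_isSymm hcomm hp htop hpred (isSymm_shearPart ⟨M, hM⟩)
  have hdecomp := symplecticShear_shearPart_mul_symplecticLevi_leviPart ⟨M, hM⟩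
  exact (congrArg (· ∈ H) hdecomp).mp (mul_mem hshear hlevi)

end Generation

/-! ### The abelianization of the unitriangular symplectic group -/

lemma IsUnitriangular.row_top {l R : Type*} [LinearOrder l] [OrderTop l] [Zero R]
    [One R] {A : Matrix l l R} (hA : IsUnitriangular id A) : A ⊤ = Pi.single ⊤ 1 := by
  ext j
  rcases eq_or_ne j ⊤ with rfl | hj
  · rw [hA.2, Pi.single_eq_same]
  · rw [hA.1 (show id j < id ⊤ from hj.lt_top), Pi.single_eq_of_ne hj]

lemma IsUnitriangular.row_of_covBy_top {l R : Type*} [LinearOrder l] [OrderTop l]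
    [AddMonoidWithOne R] {A : Matrix l l R} (hA : IsUnitriangular id A) {p : l} (hp : p ⋖ ⊤) :
    A p = Pi.single p 1 + Pi.single ⊤ (A p ⊤) := by
  ext j
  rcases eq_or_ne j ⊤ with rfl | hj
  · simp [hp.lt.ne']
  rcases (hp.le_of_lt hj.lt_top).eq_or_lt with rfl | hjp
  · simp [hA.2, hj]
  · simpa [hj, hjp.ne] using hA.1 hjp

lemma covBy_succ_of_ne_top {α : Type*} [PartialOrder α] [OrderTop α] [SuccOrder α] {a : α}
    (ha : a ≠ ⊤) : a ⋖ Order.succ a :=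
  Order.covBy_succ_of_not_isMax (not_isMax_iff_ne_top.2 ha)

lemma pred_top_covBy_top {α : Type*} [PartialOrder α] [OrderTop α] [PredOrder α] [Nontrivial α] :
    Order.pred (⊤ : α) ⋖ ⊤ :=
  Order.pred_covBy_of_not_isMin not_isMin_top

section Abelianization

variable {l : Type*} [Fintype l] [LinearOrder l] [OrderTop l]

lemma shearPart_mul_top_top {R : Type*} [CommRing R] (M N : symplecticUnipotent l R) :
    shearPart (M * N) ⊤ ⊤ = shearPart M ⊤ ⊤ + shearPart N ⊤ ⊤ := by
  rw [shearPart_mul, Matrix.add_apply, mul_mul_apply, transpose_transpose,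
    (isUnitriangular_leviPart M).row_top]
  simp

lemma shearPart_mul_self_add_top {p : l} (hp : p ⋖ ⊤) (M N : symplecticUnipotent l (ZMod 2)) :
    shearPart (M * N) p p + shearPart (M * N) p ⊤ =
      (shearPart M p p + shearPart M p ⊤) + (shearPart N p p + shearPart N p ⊤) := by
  -- `S ↦ A S Aᵀ` adds `2 * A p ⊤ * S p ⊤ + (A p ⊤) ^ 2 * S ⊤ ⊤` to the entry `S p p` and
  -- `A p ⊤ * S ⊤ ⊤` to the entry `S p ⊤`; over `𝔽₂` these cancel.
  rw [shearPart_mul, Matrix.add_apply, Matrix.add_apply, mul_mul_apply, mul_mul_apply,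
    transpose_transpose, (isUnitriangular_leviPart M).row_top,
    (isUnitriangular_leviPart M).row_of_covBy_top hp]
  simp only [mulVec_add, add_dotProduct, dotProduct_add, single_dotProduct, one_mul, mulVec_single,
    MulOpposite.op_one, one_smul, MulOpposite.smul_eq_mul_unop, MulOpposite.unop_op, Pi.smul_apply,
    col_apply, (isSymm_shearPart N).apply p ⊤]
  generalize (leviPart M).1 p ⊤ = a, shearPart N p ⊤ = b, shearPart N ⊤ ⊤ = d
  have hsq : a * a = a := by rw [← sq, ZMod.pow_card]
  linear_combination d * hsq + (a * b + a * d) * (CharTwo.two_eq_zero (R := ZMod 2))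

variable [SuccOrder l] [PredOrder l]

/-- The independent homomorphisms to `𝔽₂` that together compute the abelianization. The coordinate
`some i` is the entry of the Levi part just right of the diagonal in row `i`, except that the last
row, which has no such entry, gives the last diagonal entry of the shear part; `none` is the
additional homomorphism special to `𝔽₂`. -/
def abelianizationCoordinates [Nontrivial l] :
    symplecticUnipotent l (ZMod 2) →* Multiplicative (Option l → ZMod 2) :=
  MonoidHom.mk' (fun M => .ofAdd fun
    | none => shearPart M (Order.pred ⊤) (Order.pred ⊤) + shearPart M (Order.pred ⊤) ⊤
    | some i => if i = ⊤ then shearPart M ⊤ ⊤ else (leviPart M).1 i (Order.succ i)) fun M N => by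
  rw [← ofAdd_add]
  congr 1
  ext (_ | i)
  · exact shearPart_mul_self_add_top pred_top_covBy_top M N
  · rcases eq_or_ne i ⊤ with rfl | hi
    · simp [shearPart_mul_top_top]
    · simp only [Pi.add_apply, if_neg hi, map_mul]
      exact (isUnitriangular_leviPart M).mul_apply_of_covBy Function.injective_id
        (isUnitriangular_leviPart N) (covBy_succ_of_ne_top hi)

variable (l) in
/-- The root elements dual to `abelianizationCoordinates`: those of the simple roots, indexed by
`some i`, and at `none` that of the long root `2ε` for the last but one index. -/
def abelianizationGenerator (R : Type*) [CommRing R] : Option l → symplecticUnipotent l R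
  | none => ⟨symplecticShear (single (Order.pred ⊤) (Order.pred ⊤) 1) (isSymm_single_self _ _),
      symplecticShear_mem_symplecticUnipotent _⟩
  | some i =>
    if hi : i = ⊤ then
      ⟨symplecticShear (single ⊤ ⊤ 1) (isSymm_single_self _ _),
        symplecticShear_mem_symplecticUnipotent _⟩
    else
      have hlt := (covBy_succ_of_ne_top hi).lt
      ⟨symplecticLevi (SpecialLinearGroup.transvection hlt.ne 1),
        symplecticLevi_mem_symplecticUnipotent (isUnitriangular_transvection hlt 1)⟩

lemma abelianizationGenerator_some_top (R : Type*) [CommRing R] :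
    abelianizationGenerator l R (some ⊤) = ⟨symplecticShear (single ⊤ ⊤ 1) (isSymm_single_self _ _),
      symplecticShear_mem_symplecticUnipotent _⟩ :=
  dif_pos rfl

lemma abelianizationGenerator_some_of_covBy (R : Type*) [CommRing R] {i j : l} (hij : i ⋖ j) :
    abelianizationGenerator l R (some i) =
      ⟨symplecticLevi (SpecialLinearGroup.transvection hij.lt.ne 1),
        symplecticLevi_mem_symplecticUnipotent (isUnitriangular_transvection hij.lt 1)⟩ := by
  obtain rfl := hij.succ_eq
  exact dif_neg hij.lt.ne_top

lemma abelianizationGenerator_sq (x : Option l) : abelianizationGenerator l (ZMod 2) x ^ 2 = 1 := by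
  have hshear {S : Matrix l l (ZMod 2)} (hS : S.IsSymm) : symplecticShear S hS ^ 2 = 1 := by
    rw [sq, ← symplecticShear_add, ← symplecticShear_zero]
    simp only [CharTwo.add_self_eq_zero]
  have hlevi {i j : l} (hij : i ≠ j) :
      symplecticLevi (SpecialLinearGroup.transvection hij (1 : ZMod 2)) ^ 2 = 1 := by
    rw [← map_pow, sq, ← SpecialLinearGroup.transvection_add, CharTwo.add_self_eq_zero,
      specialLinearGroup_transvection_zero, map_one]
  ext1
  rcases x with _ | i
  · exact hshear (isSymm_single_self _ _)
  rcases eq_or_ne i ⊤ with rfl | hi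
  · rw [abelianizationGenerator_some_top]
    exact hshear (isSymm_single_self _ _)
  · rw [abelianizationGenerator_some_of_covBy _ (covBy_succ_of_ne_top hi)]
    exact hlevi _

lemma abelianizationCoordinates_abelianizationGenerator [Nontrivial l] (x : Option l) :
    abelianizationCoordinates (abelianizationGenerator l (ZMod 2) x) = .ofAdd (Pi.single x 1) := by
  have hpred : Order.pred (⊤ : l) ≠ ⊤ := pred_top_covBy_top.lt.ne
  refine congrArg Multiplicative.ofAdd (funext fun y => ?_)
  rcases x with _ | i
  · rw [abelianizationGenerator, leviPart_symplecticShear, shearPart_symplecticShear]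
    rcases y with _ | j
    · simp [hpred]
    · rcases eq_or_ne j ⊤ with rfl | hj
      · simp [hpred]
      · simp [hj, (covBy_succ_of_ne_top hj).lt.ne]
  rcases eq_or_ne i ⊤ with rfl | hi
  · rw [abelianizationGenerator_some_top, leviPart_symplecticShear, shearPart_symplecticShear]
    rcases y with _ | j
    · simp [hpred.symm]
    · rcases eq_or_ne j ⊤ with rfl | hj
      · simp
      · simp [hj, (covBy_succ_of_ne_top hj).lt.ne]
  · rw [abelianizationGenerator_some_of_covBy _ (covBy_succ_of_ne_top hi), leviPart_symplecticLevi,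
      shearPart_symplecticLevi]
    rcases y with _ | j
    · simp
    · rcases eq_or_ne j ⊤ with rfl | hj
      · simp [hi.symm]
      rcases eq_or_ne j i with rfl | hji
      · simp [hj, (covBy_succ_of_ne_top hj).lt.ne, SpecialLinearGroup.transvection_coe]
      · simp [hj, hji, hji.symm, (covBy_succ_of_ne_top hj).lt.ne,
          SpecialLinearGroup.transvection_coe]

lemma symplecticUnipotent_le_closure_abelianizationGenerator_sup_commutator [Nontrivial l] :
    symplecticUnipotent l (ZMod 2) ≤
      Subgroup.closure (Set.range fun x => (abelianizationGenerator l (ZMod 2) x).1) ⊔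
        ⁅symplecticUnipotent l (ZMod 2), symplecticUnipotent l (ZMod 2)⁆ := by
  set H := Subgroup.closure (Set.range fun x => (abelianizationGenerator l (ZMod 2) x).1) ⊔
    ⁅symplecticUnipotent l (ZMod 2), symplecticUnipotent l (ZMod 2)⁆
  have hgen (x : Option l) : (abelianizationGenerator l (ZMod 2) x).1 ∈ H :=
    Subgroup.mem_sup_left (Subgroup.subset_closure ⟨x, rfl⟩)
  have hcases (c : ZMod 2) : c = 0 ∨ c = 1 := by decide +revert
  refine symplecticUnipotent_le_of_commutator_le le_sup_right pred_top_covBy_top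
    (fun c => ?_) (fun c => ?_) fun i j hij c => ?_
  all_goals rcases hcases c with rfl | rfl
  · rw [single_zero]
    exact zero_mem _
  · have hmem := hgen (some ⊤)
    rw [abelianizationGenerator_some_top] at hmem
    exact ⟨isSymm_single_self _ _, hmem⟩
  · rw [single_zero]
    exact zero_mem _
  · exact ⟨isSymm_single_self _ _, hgen none⟩
  · rw [specialLinearGroup_transvection_zero, map_one]
    exact one_mem H
  · have hmem := hgen (some i)
    rwa [abelianizationGenerator_some_of_covBy _ hij] at hmem

variable (l) in
/-- The isomorphism induced by `abelianizationCoordinates`. -/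
noncomputable def abelianizationSymplecticUnipotentEquiv [Nontrivial l] :
    Abelianization (symplecticUnipotent l (ZMod 2)) ≃* Multiplicative (Option l → ZMod 2) :=
  MulEquiv.ofBijective (Abelianization.lift abelianizationCoordinates) <|
    bijective_of_map_generators_eq_single
      (closure_range_abelianization_of_eq_top
        symplecticUnipotent_le_closure_abelianizationGenerator_sup_commutator)
      (fun x => by rw [← map_pow, abelianizationGenerator_sq, map_one])
      (fun x => by
        rw [Abelianization.lift_apply_of, abelianizationCoordinates_abelianizationGenerator])

end Abelianization

/-- Let `n ≥ 2` and let `R` be a Sylow `2`-subgroup of `Sp_{2n}(𝔽₂)`. Then the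
abelianization `R/[R,R]` is isomorphic to the elementary abelian group `(ZMod 2)^(n+1)`. -/
theorem abelianization_sylow_two_symplectic (n : ℕ) (hn : 2 ≤ n)
    (R : Sylow 2 (Matrix.symplecticGroup (Fin n) (ZMod 2))) :
    Nonempty (Abelianization R ≃* Multiplicative (Fin (n + 1) → ZMod 2)) := by
  have : Nontrivial (Fin n) := Fin.nontrivial_iff_two_le.2 hn
  have : NeZero n := ⟨by lia⟩
  obtain ⟨P, hP⟩ := exists_sylow_eq_symplecticUnipotent (l := Fin n) (R := ZMod 2) 2
  let toUnipotent : R ≃* symplecticUnipotent (Fin n) (ZMod 2) :=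
    (R.equiv P).trans (MulEquiv.subgroupCongr hP)
  let reindex : (Option (Fin n) → ZMod 2) ≃+ (Fin (n + 1) → ZMod 2) :=
    (LinearEquiv.funCongrLeft (ZMod 2) (ZMod 2) (finSuccEquiv n)).toAddEquiv
  exact ⟨toUnipotent.abelianizationCongr.trans <|
    (abelianizationSymplecticUnipotentEquiv (Fin n)).trans (AddEquiv.toMultiplicative reindex)⟩
end
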